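/- Let Y be a nonnegative random variable with finite nonzero mean μ = E[Y], and suppose there exists a random variable Y^s defined on the same probability space having the Y-size bias distribution and satisfying |Y^s − Y| ≤ c almost surely for some constant c > 0. Then for all t > 0, P(Y − μ ≤ −t) ≤ exp(−t²/(2cμ)). -/

import Mathlib

open MeasureTheory

/-- `Ys` has the `Y`-size bias distribution (with respect to the probability measure `P`):
`E[Y f(Y)] = E[Y] ⬝ E[f(Ys)]` for all bounded measurable `f`. -/
def HasSizeBiasedDistribution {Ω : Type*} [MeasurableSpace Ω] (P : Measure Ω)
    (Y Ys : Ω → ℝ) : Prop :=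
  ∀ f : ℝ → ℝ, Measurable f → (∃ C : ℝ, ∀ x, |f x| ≤ C) →
    ∫ ω, Y ω * f (Y ω) ∂P = (∫ ω, Y ω ∂P) * ∫ ω, f (Ys ω) ∂P

/-!
Size biasing turns differentiation of the moment generating function `M` of `Y` into
`M'(θ) = μ E[exp (θ Yˢ)]`. For `θ < 0` the bound `Yˢ ≤ Y + c` then gives
`M'(θ) ≥ μ exp (c θ) M(θ) ≥ μ (1 + c θ) M(θ)`, and integrating this inequality from `θ` to `0`
yields `M(θ) ≤ exp (μ (θ + c θ² / 2))`. The tail bound is Chernoff's inequality at the optimal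
`θ = -t / (c μ)`.
-/

open ProbabilityTheory Set

theorem monotoneOn_mul_exp_neg {D : Set ℝ} (hD : Convex ℝ D) {f f' g g' : ℝ → ℝ}
    (hf : ContinuousOn f D) (hg : ContinuousOn g D)
    (hf' : ∀ x ∈ interior D, HasDerivWithinAt f (f' x) (interior D) x)
    (hg' : ∀ x ∈ interior D, HasDerivWithinAt g (g' x) (interior D) x)
    (hle : ∀ x ∈ interior D, g' x * f x ≤ f' x) :
    MonotoneOn (fun x ↦ f x * Real.exp (-g x)) D := by
  refine monotoneOn_of_hasDerivWithinAt_nonneg hD (hf.mul hg.neg.rexp)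
    (fun x hx ↦ (hf' x hx).mul (hg' x hx).neg.exp) fun x hx ↦ ?_
  calc
    0 ≤ (f' x - g' x * f x) * Real.exp (-g x) :=
      mul_nonneg (sub_nonneg.mpr (hle x hx)) (Real.exp_pos _).le
    _ = f' x * Real.exp (-g x) + f x * (Real.exp (-g x) * -g' x) := by ring

section LaplaceTransform

variable {Ω : Type*} [MeasurableSpace Ω] {P : Measure Ω} [IsFiniteMeasure P] {X : Ω → ℝ}

theorem Iic_zero_subset_integrableExpSet (hX : AEMeasurable X P) (hX0 : 0 ≤ᵐ[P] X) :
    Iic 0 ⊆ integrableExpSet X P := fun θ hθ ↦ by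
  have h := integrable_exp_mul_of_le (-θ) 0 (neg_nonneg.mpr hθ) hX.neg
    (hX0.mono fun ω hω ↦ neg_nonpos.mpr hω)
  simpa [integrableExpSet] using h

theorem continuousOn_mgf_Iic_zero (hX : AEMeasurable X P) (hX0 : 0 ≤ᵐ[P] X) :
    ContinuousOn (mgf X P) (Iic 0) := by
  refine continuousOn_of_dominated (bound := fun _ ↦ 1)
    (fun θ hθ ↦ (Iic_zero_subset_integrableExpSet hX hX0 hθ).aestronglyMeasurable)
    (fun θ hθ ↦ ?_) (integrable_const 1) (ae_of_all _ fun ω ↦ by fun_prop)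
  filter_upwards [hX0] with ω hω
  rw [Real.norm_eq_abs, Real.abs_exp, Real.exp_le_one_iff]
  exact mul_nonpos_of_nonpos_of_nonneg hθ hω

end LaplaceTransform

namespace HasSizeBiasedDistribution

variable {Ω : Type*} [MeasurableSpace Ω] {P : Measure Ω} {Y Ys : Ω → ℝ}

/- The definition does not ask `Ys` to be measurable. If it were not, the right-hand side of the
size bias identity for the positive bounded function `sigmoid` would be the junk value `0`. -/
theorem aemeasurable (h : HasSizeBiasedDistribution P Y Ys) (hY0 : 0 ≤ᵐ[P] Y)
    (hY : Integrable Y P) (hμ : ∫ ω, Y ω ∂P ≠ 0) : AEMeasurable Ys P := by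
  have sigmoid_bound (x : ℝ) : |x.sigmoid| ≤ 1 :=
    (abs_of_pos x.sigmoid_pos).trans_le x.sigmoid_le_one
  have sigmoid_meas : Measurable Real.sigmoid := continuous_sigmoid.measurable
  have hint : Integrable (fun ω ↦ Y ω * (Y ω).sigmoid) P :=
    hY.mul_bdd (c := 1) (sigmoid_meas.comp_aemeasurable hY.aemeasurable).aestronglyMeasurable
      (ae_of_all _ fun ω ↦ sigmoid_bound (Y ω))
  have hne : ∫ ω, Y ω * (Y ω).sigmoid ∂P ≠ 0 := fun h0 ↦ by
    rw [integral_eq_zero_iff_of_nonneg_ae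
      (hY0.mono fun ω hω ↦ mul_nonneg hω (Y ω).sigmoid_nonneg) hint] at h0
    exact hμ (integral_eq_zero_of_ae <| h0.mono fun ω hω ↦
      (mul_eq_zero.mp hω).resolve_right (Y ω).sigmoid_pos.ne')
  rw [h Real.sigmoid sigmoid_meas ⟨1, sigmoid_bound⟩] at hne
  have hYs := (Integrable.of_integral_ne_zero (right_ne_zero_of_mul hne)).aemeasurable
  exact (continuous_sigmoid.measurableEmbedding Real.sigmoid_injective).aemeasurable_comp_iff.mp hYs

theorem ae_mem [IsFiniteMeasure P] (h : HasSizeBiasedDistribution P Y Ys)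
    (hYs : AEMeasurable Ys P) (hμ : ∫ ω, Y ω ∂P ≠ 0) {s : Set ℝ} (hs : MeasurableSet s)
    (hmem : ∀ᵐ ω ∂P, Y ω ∈ s) : ∀ᵐ ω ∂P, Ys ω ∈ s := by
  have hbias := h (sᶜ.indicator 1) (measurable_one.indicator hs.compl)
    ⟨1, fun x ↦ by by_cases hx : x ∈ s <;> simp [hx]⟩
  have hzero : ∫ ω, Y ω * sᶜ.indicator 1 (Y ω) ∂P = 0 :=
    integral_eq_zero_of_ae <| hmem.mono fun ω hω ↦ by simp [hω]
  have hprob : ∫ ω, sᶜ.indicator 1 (Ys ω) ∂P = P.real (Ys ⁻¹' sᶜ) :=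
    (integral_indicator₀ (f := 1) (hYs.nullMeasurable hs.compl)).trans (by simp)
  rw [hzero, hprob, zero_eq_mul, or_iff_right hμ, measureReal_eq_zero_iff] at hbias
  exact hbias

/- On the real line `x ↦ exp (θ * x)` is unbounded, so the size bias identity is applied to
`x ↦ exp (θ * max x 0)`. -/
theorem integral_mul_exp (h : HasSizeBiasedDistribution P Y Ys) (hY0 : 0 ≤ᵐ[P] Y)
    (hYs0 : 0 ≤ᵐ[P] Ys) {θ : ℝ} (hθ : θ ≤ 0) :
    ∫ ω, Y ω * Real.exp (θ * Y ω) ∂P = (∫ ω, Y ω ∂P) * mgf Ys P θ := by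
  have hbias := h (fun x ↦ Real.exp (θ * max x 0)) (by fun_prop) ⟨1, fun x ↦ by
    rw [Real.abs_exp, Real.exp_le_one_iff]
    exact mul_nonpos_of_nonpos_of_nonneg hθ (le_max_right x 0)⟩
  calc
    ∫ ω, Y ω * Real.exp (θ * Y ω) ∂P = ∫ ω, Y ω * Real.exp (θ * max (Y ω) 0) ∂P :=
      integral_congr_ae <| hY0.mono fun ω (hω : 0 ≤ _) ↦ by simp only [max_eq_left hω]
    _ = (∫ ω, Y ω ∂P) * ∫ ω, Real.exp (θ * max (Ys ω) 0) ∂P := hbias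
    _ = (∫ ω, Y ω ∂P) * mgf Ys P θ := by
      congr 1
      exact integral_congr_ae <| hYs0.mono fun ω (hω : 0 ≤ _) ↦ by simp only [max_eq_left hω]

variable [IsFiniteMeasure P]

theorem ae_nonneg (h : HasSizeBiasedDistribution P Y Ys) (hY0 : 0 ≤ᵐ[P] Y)
    (hY : Integrable Y P) (hμ : ∫ ω, Y ω ∂P ≠ 0) : 0 ≤ᵐ[P] Ys :=
  h.ae_mem (h.aemeasurable hY0 hY hμ) hμ measurableSet_Ici hY0

theorem hasDerivAt_mgf (h : HasSizeBiasedDistribution P Y Ys) (hY0 : 0 ≤ᵐ[P] Y)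
    (hY : Integrable Y P) (hμ : ∫ ω, Y ω ∂P ≠ 0) {θ : ℝ} (hθ : θ < 0) :
    HasDerivAt (mgf Y P) ((∫ ω, Y ω ∂P) * mgf Ys P θ) θ := by
  rw [← h.integral_mul_exp hY0 (h.ae_nonneg hY0 hY hμ) hθ.le]
  refine ProbabilityTheory.hasDerivAt_mgf ?_
  exact interior_mono (Iic_zero_subset_integrableExpSet hY.aemeasurable hY0) (by simpa using hθ)

theorem one_add_mul_mul_mgf_le (h : HasSizeBiasedDistribution P Y Ys) (hY0 : 0 ≤ᵐ[P] Y)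
    (hY : Integrable Y P) (hμ : ∫ ω, Y ω ∂P ≠ 0) {c : ℝ} (hle : ∀ᵐ ω ∂P, Ys ω ≤ Y ω + c)
    {θ : ℝ} (hθ : θ ≤ 0) :
    (1 + c * θ) * mgf Y P θ ≤ mgf Ys P θ := by
  have hint : Integrable (fun ω ↦ Real.exp (θ * Ys ω)) P :=
    Iic_zero_subset_integrableExpSet (h.aemeasurable hY0 hY hμ) (h.ae_nonneg hY0 hY hμ) hθ
  calc
    (1 + c * θ) * mgf Y P θ ≤ Real.exp (θ * c) * mgf Y P θ := by
      gcongr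
      · exact mgf_nonneg
      · linarith [Real.add_one_le_exp (θ * c)]
    _ = mgf (fun ω ↦ Y ω + c) P θ := by rw [mgf_add_const, mul_comm]
    _ ≤ mgf Ys P θ := mgf_anti_of_nonpos hle hθ hint

end HasSizeBiasedDistribution

section LeftTail

variable {Ω : Type*} [MeasurableSpace Ω] {P : Measure Ω} [IsProbabilityMeasure P] {Y Ys : Ω → ℝ}

theorem HasSizeBiasedDistribution.mgf_le_exp (h : HasSizeBiasedDistribution P Y Ys)
    (hY0 : 0 ≤ᵐ[P] Y) (hY : Integrable Y P) (hμ : ∫ ω, Y ω ∂P ≠ 0) {c : ℝ}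
    (hle : ∀ᵐ ω ∂P, Ys ω ≤ Y ω + c) {θ : ℝ} (hθ : θ ≤ 0) :
    mgf Y P θ ≤ Real.exp ((∫ ω, Y ω ∂P) * (θ + c * θ ^ 2 / 2)) := by
  set μ := ∫ ω, Y ω ∂P
  have hexponent (x : ℝ) :
      HasDerivAt (fun x ↦ μ * (x + c * x ^ 2 / 2)) (μ * (1 + c * x)) x := by
    have hsq : HasDerivAt (fun x ↦ c * x ^ 2 / 2) (c * x) x :=
      (((hasDerivAt_pow 2 x).const_mul c).div_const 2).congr_deriv (by norm_num; ring)
    exact ((hasDerivAt_id x).add hsq).const_mul μ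
  have hmono : MonotoneOn (fun x ↦ mgf Y P x * Real.exp (-(μ * (x + c * x ^ 2 / 2)))) (Iic 0) := by
    refine monotoneOn_mul_exp_neg (f' := fun x ↦ μ * mgf Ys P x) (convex_Iic 0)
      (continuousOn_mgf_Iic_zero hY.aemeasurable hY0) (by fun_prop) (fun x hx ↦ ?_)
      (fun x _ ↦ (hexponent x).hasDerivWithinAt) (fun x hx ↦ ?_) <;> rw [interior_Iic] at hx
    · exact (h.hasDerivAt_mgf hY0 hY hμ hx).hasDerivWithinAt
    · rw [mul_assoc]
      exact mul_le_mul_of_nonneg_left (h.one_add_mul_mul_mgf_le hY0 hY hμ hle (le_of_lt hx))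
        (integral_nonneg_of_ae hY0)
  have hzero : mgf Y P θ * Real.exp (-(μ * (θ + c * θ ^ 2 / 2))) ≤ 1 := by
    simpa using hmono hθ self_mem_Iic hθ
  rwa [Real.exp_neg, ← div_eq_mul_inv, div_le_one (Real.exp_pos _)] at hzero

theorem left_tail_of_bounded_size_bias_coupling_general (hY0 : 0 ≤ᵐ[P] Y) (hY : Integrable Y P)
    {μ : ℝ} (hμ : μ = ∫ ω, Y ω ∂P) (hμ0 : μ ≠ 0) {c : ℝ} (hc : 0 < c)
    (h : HasSizeBiasedDistribution P Y Ys) (hle : ∀ᵐ ω ∂P, Ys ω ≤ Y ω + c) {t : ℝ} (ht : 0 < t) :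
    P.real {ω | Y ω - μ ≤ -t} ≤ Real.exp (-t ^ 2 / (2 * c * μ)) := by
  have hμ_pos : 0 < μ := (hμ ▸ integral_nonneg_of_ae hY0).lt_of_ne' hμ0
  set θ := -(t / (c * μ)) with hθ_def
  have hθ : θ ≤ 0 := neg_nonpos.mpr (by positivity)
  have hset : {ω | Y ω - μ ≤ -t} = {ω | Y ω ≤ μ - t} := by
    ext ω
    simp only [mem_ofPred_eq, sub_le_iff_le_add, neg_add_eq_sub]
  calc
    P.real {ω | Y ω - μ ≤ -t} ≤ Real.exp (-θ * (μ - t)) * mgf Y P θ := by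
      rw [hset]
      exact measure_le_le_exp_mul_mgf (μ - t) hθ
        (Iic_zero_subset_integrableExpSet hY.aemeasurable hY0 hθ)
    _ ≤ Real.exp (-θ * (μ - t)) * Real.exp (μ * (θ + c * θ ^ 2 / 2)) := by
      gcongr
      exact hμ ▸ h.mgf_le_exp hY0 hY (hμ ▸ hμ0) hle hθ
    _ = Real.exp (-t ^ 2 / (2 * c * μ)) := by
      rw [← Real.exp_add, hθ_def]
      congr 1
      field

end LeftTail

/-- Left tail bound from a bounded size bias coupling. -/
theorem left_tail_of_bounded_size_bias_coupling
    {Ω : Type*} [MeasurableSpace Ω] (P : Measure Ω) [IsProbabilityMeasure P]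
    (Y Ys : Ω → ℝ) (hYnonneg : ∀ᵐ ω ∂P, 0 ≤ Y ω) (hYint : Integrable Y P)
    (μ : ℝ) (hμ : μ = ∫ ω, Y ω ∂P) (hμne : μ ≠ 0)
    (c : ℝ) (hc : 0 < c)
    (hsb : HasSizeBiasedDistribution P Y Ys)
    (hbdd : ∀ᵐ ω ∂P, |Ys ω - Y ω| ≤ c) :
    ∀ t : ℝ, 0 < t →
      (P {ω | Y ω - μ ≤ -t}).toReal ≤ Real.exp (-t ^ 2 / (2 * c * μ)) :=
  fun _ ↦ left_tail_of_bounded_size_bias_coupling_general hYnonneg hYint hμ hμne hc hsb <|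
    hbdd.mono fun _ hω ↦ sub_le_iff_le_add'.mp (le_of_abs_le hω)
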